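/- arXiv:1209.3239 — 6 statements merged into one kernel-verified Lean document; each statement's English description precedes it below -/
import Mathlib

section
/- Let J be a unital Jordan algebra over a field k of characteristic ≠ 2 whose identity element decomposes as 1 = e_1 + ⋯ + e_n into pairwise orthogonal idempotents (e_i·e_j = 0 for i ≠ j). Define J_ii = {x ∈ J : x·e_i = x} and, for i ≠ j, J_ij = {x ∈ J : x·e_i = (1/2)x and x·e_j = (1/2)x}. Then for pairwise distinct indices i, j, k, l: J_ii·J_ii ⊆ J_ii, J_ij·J_ii ⊆ J_ij, J_ij·J_ij ⊆ J_ii + J_jj, J_ij·J_jk ⊆ J_ik, and J_ii·J_jj = J_ii·J_jk = J_ij·J_kl = 0. -/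
variable {k : Type*} [Field k] {J : Type*} [NonAssocRing J]
  [Module k J] [SMulCommClass k J J] [IsScalarTower k J J]

/-- The diagonal Peirce component `J_ii = {x ∈ J : x·e = x}` relative to an idempotent `e`. -/
def peirceDiag (k : Type*) [Field k] {J : Type*} [NonAssocRing J]
    [Module k J] [SMulCommClass k J J] [IsScalarTower k J J] (e : J) : Submodule k J where
  carrier := {x : J | x * e = x}
  add_mem' := by
    intro a b ha hb
    simp only [Set.mem_setOf_eq] at *
    rw [add_mul, ha, hb]
  zero_mem' := by simp
  smul_mem' := by
    intro r x hx
    simp only [Set.mem_setOf_eq] at *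
    rw [smul_mul_assoc, hx]

/-- The off-diagonal Peirce component
`J_ij = {x ∈ J : x·e_i = (1/2)·x and x·e_j = (1/2)·x}` relative to idempotents `e_i, e_j`. -/
def peirceOff (k : Type*) [Field k] {J : Type*} [NonAssocRing J]
    [Module k J] [SMulCommClass k J J] [IsScalarTower k J J] (a b : J) : Submodule k J where
  carrier := {x : J | x * a = (2⁻¹ : k) • x ∧ x * b = (2⁻¹ : k) • x}
  add_mem' := by
    intro u v hu hv
    simp only [Set.mem_setOf_eq] at *
    rw [add_mul, add_mul, hu.1, hu.2, hv.1, hv.2, smul_add]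
    exact ⟨rfl, rfl⟩
  zero_mem' := by simp
  smul_mem' := by
    intro r x hx
    simp only [Set.mem_setOf_eq] at *
    rw [smul_mul_assoc, smul_mul_assoc, hx.1, hx.2, smul_comm]
    exact ⟨rfl, rfl⟩

theorem pj_two_cancel (hchar : (2 : k) ≠ 0) {a b : J} (h : a + a = b + b) : a = b := by
  have h2 : (2 : k) • a = (2 : k) • b := by rw [two_smul, two_smul, h]
  exact smul_right_injective J hchar h2

theorem pj_lin (hchar : (2 : k) ≠ 0)
    (hcomm : ∀ x y : J, x * y = y * x)
    (hJordan : ∀ x y : J, ((x * x) * y) * x = (x * x) * (y * x)) (a b c y : J) :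
    ((a * b) * y) * c + ((b * c) * y) * a + ((c * a) * y) * b =
      (a * b) * (y * c) + (b * c) * (y * a) + (c * a) * (y * b) := by
  apply pj_two_cancel hchar
  have h1 := hJordan (a + b + c) y
  have h2 := hJordan (a + b) y
  have h3 := hJordan (b + c) y
  have h4 := hJordan (a + c) y
  have h5 := hJordan a y
  have h6 := hJordan b y
  have h7 := hJordan c y
  simp only [mul_add, add_mul, hcomm b a, hcomm c b, hcomm a c] at h1 h2 h3 h4
  linear_combination (norm := module) h1 - h2 - h3 - h4 + h5 + h6 + h7

/-- Eigenvalue relation `(2α-1) pe = β(2α-1) p`. -/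
theorem pj_eig (hchar : (2 : k) ≠ 0)
    (hcomm : ∀ x y : J, x * y = y * x)
    (hJordan : ∀ x y : J, ((x * x) * y) * x = (x * x) * (y * x)) {e x y : J} (α β : k)
    (he : e * e = e) (hx : x * e = α • x) (hy : y * e = β • y) :
    (2 * α - 1) • ((x * y) * e) = (β * (2 * α - 1)) • (x * y) := by
  have h := pj_lin hchar hcomm hJordan e e x y
  rw [he, hcomm e x, hx, hy, hcomm e y, hy] at h
  simp only [smul_mul_assoc, mul_smul_comm, hcomm y x, hcomm e (x * y)] at h
  linear_combination (norm := module) h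

theorem pj_one (hchar : (2 : k) ≠ 0)
    (hcomm : ∀ x y : J, x * y = y * x)
    (hJordan : ∀ x y : J, ((x * x) * y) * x = (x * x) * (y * x)) {e x y : J} (β : k)
    (he : e * e = e) (hx : x * e = x) (hy : y * e = β • y) :
    (x * y) * e = β • (x * y) := by
  have h := pj_eig hchar hcomm hJordan 1 β he (by rw [hx, one_smul]) hy
  linear_combination (norm := module) h

theorem pj_zero (hchar : (2 : k) ≠ 0)
    (hcomm : ∀ x y : J, x * y = y * x)
    (hJordan : ∀ x y : J, ((x * x) * y) * x = (x * x) * (y * x)) {e x y : J} (β : k)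
    (he : e * e = e) (hx : x * e = 0) (hy : y * e = β • y) :
    (x * y) * e = β • (x * y) := by
  have h := pj_eig hchar hcomm hJordan 0 β he (by rw [hx, zero_smul]) hy
  linear_combination (norm := module) (-1 : k) • h

theorem pj_one_zero (hchar : (2 : k) ≠ 0)
    (hcomm : ∀ x y : J, x * y = y * x)
    (hJordan : ∀ x y : J, ((x * x) * y) * x = (x * x) * (y * x)) {e x y : J}
    (he : e * e = e) (hx : x * e = x) (hy : y * e = 0) : x * y = 0 := by
  have h := pj_one hchar hcomm hJordan (0 : k) he hx (by rw [hy, zero_smul])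
  have h' := pj_zero hchar hcomm hJordan (1 : k) he hy (by rw [hx, one_smul])
  rw [hcomm y x, h, zero_smul, one_smul] at h'
  exact h'.symm

theorem pj_half (hchar : (2 : k) ≠ 0)
    (hcomm : ∀ x y : J, x * y = y * x)
    (hJordan : ∀ x y : J, ((x * x) * y) * x = (x * x) * (y * x)) {e x y : J}
    (hx : x * e = (2⁻¹ : k) • x) (hy : y * e = (2⁻¹ : k) • y) (he : e * e = e) :
    ((x * y) * e) * e = (x * y) * e := by
  have h := pj_lin hchar hcomm hJordan e x y e
  rw [hcomm e x, hcomm e y, he, hx, hy] at h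
  simp only [smul_mul_assoc, mul_smul_comm, hx, hy, hcomm y x] at h
  linear_combination (norm := module) h

/-- Let `J` be a unital Jordan algebra over a field `k` of characteristic ≠ 2 whose identity
element decomposes as `1 = e_1 + ⋯ + e_n` into pairwise orthogonal idempotents. With
`J_ii = {x : x·e_i = x}` and `J_ij = {x : x·e_i = (1/2)x = x·e_j}` for `i ≠ j`, the Peirce
multiplication rules hold: for pairwise distinct indices `i, j, m, l`:
`J_ii·J_ii ⊆ J_ii`, `J_ij·J_ii ⊆ J_ij`, `J_ij·J_ij ⊆ J_ii + J_jj`, `J_ij·J_jm ⊆ J_im`, and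
`J_ii·J_jj = J_ii·J_jm = J_ij·J_ml = 0`. -/
theorem peirce_multiplication_many_idempotents (hchar : (2 : k) ≠ 0)
    (hcomm : ∀ x y : J, x * y = y * x)
    (hJordan : ∀ x y : J, ((x * x) * y) * x = (x * x) * (y * x))
    {n : ℕ} (e : Fin n → J)
    (hidem : ∀ i, e i * e i = e i)
    (horth : ∀ i j, i ≠ j → e i * e j = 0)
    (hsum : ∑ i, e i = 1) :
    (∀ i, ∀ x ∈ peirceDiag k (e i), ∀ y ∈ peirceDiag k (e i),
        x * y ∈ peirceDiag k (e i)) ∧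
    (∀ i j, i ≠ j → ∀ x ∈ peirceOff k (e i) (e j), ∀ y ∈ peirceDiag k (e i),
        x * y ∈ peirceOff k (e i) (e j)) ∧
    (∀ i j, i ≠ j → ∀ x ∈ peirceOff k (e i) (e j), ∀ y ∈ peirceOff k (e i) (e j),
        x * y ∈ peirceDiag k (e i) ⊔ peirceDiag k (e j)) ∧
    (∀ i j m, i ≠ j → j ≠ m → i ≠ m →
        ∀ x ∈ peirceOff k (e i) (e j), ∀ y ∈ peirceOff k (e j) (e m),
        x * y ∈ peirceOff k (e i) (e m)) ∧
    (∀ i j, i ≠ j → ∀ x ∈ peirceDiag k (e i), ∀ y ∈ peirceDiag k (e j), x * y = 0) ∧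
    (∀ i j m, i ≠ j → j ≠ m → i ≠ m →
        ∀ x ∈ peirceDiag k (e i), ∀ y ∈ peirceOff k (e j) (e m), x * y = 0) ∧
    (∀ i j m l, i ≠ j → i ≠ m → i ≠ l → j ≠ m → j ≠ l → m ≠ l →
        ∀ x ∈ peirceOff k (e i) (e j), ∀ y ∈ peirceOff k (e m) (e l), x * y = 0) := by
  have idem2 : ∀ i j, i ≠ j → (e i + e j) * (e i + e j) = e i + e j := by
    intro i j hij
    rw [mul_add, add_mul, add_mul, hidem, hidem, horth i j hij, horth j i hij.symm]
    abel
  have half2 : ∀ x : J, (2⁻¹ : k) • x + (2⁻¹ : k) • x = x := by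
    intro x
    rw [← add_smul, ← two_mul, mul_inv_cancel₀ hchar, one_smul]
  have D : ∀ i x, x ∈ peirceDiag k (e i) → x * e i = x := fun i x h => h
  have O : ∀ i j x, x ∈ peirceOff k (e i) (e j) →
    x * e i = (2⁻¹ : k) • x ∧ x * e j = (2⁻¹ : k) • x := fun i j x h => h
  have O1 : ∀ i j x, x ∈ peirceOff k (e i) (e j) → x * (e i + e j) = x := by
    intro i j x h
    rw [mul_add, (O i j x h).1, (O i j x h).2, half2]
  have D0 : ∀ i j, i ≠ j → ∀ x, x ∈ peirceDiag k (e i) → x * e j = 0 := fun i j hij x h =>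
    pj_one_zero hchar hcomm hJordan (hidem i) (D i x h) (horth j i hij.symm)
  have O0 : ∀ i j m, i ≠ j → m ≠ i → m ≠ j → ∀ x, x ∈ peirceOff k (e i) (e j) →
      x * e m = 0 := fun i j m hij hmi hmj x h =>
    pj_one_zero hchar hcomm hJordan (idem2 i j hij) (O1 i j x h)
      (by rw [mul_add, horth m i hmi, horth m j hmj, add_zero])
  refine ⟨?_, ?_, ?_, ?_, ?_, ?_, ?_⟩
  · intro i x hx y hy
    have h := pj_one hchar hcomm hJordan (1 : k) (hidem i) (D i x hx)
      (by rw [one_smul]; exact D i y hy)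
    rw [one_smul] at h
    exact h
  · intro i j hij x hx y hy
    rw [hcomm x y]
    exact ⟨pj_one hchar hcomm hJordan _ (hidem i) (D i y hy) (O i j x hx).1,
      pj_zero hchar hcomm hJordan _ (hidem j) (D0 i j hij y hy) (O i j x hx).2⟩
  · intro i j hij x hx y hy
    have hi := pj_half hchar hcomm hJordan (O i j x hx).1 (O i j y hy).1 (hidem i)
    have hj := pj_half hchar hcomm hJordan (O i j x hx).2 (O i j y hy).2 (hidem j)
    have h := pj_one hchar hcomm hJordan (1 : k) (idem2 i j hij) (O1 i j x hx)
      (by rw [one_smul]; exact O1 i j y hy)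
    rw [one_smul, mul_add] at h
    exact Submodule.mem_sup.2 ⟨_, hi, _, hj, h⟩
  · intro i j m hij hjm him x hx y hy
    refine ⟨?_, pj_zero hchar hcomm hJordan _ (hidem m)
      (O0 i j m hij him.symm hjm.symm x hx) (O j m y hy).2⟩
    rw [hcomm x y]
    exact pj_zero hchar hcomm hJordan _ (hidem i) (O0 j m i hjm hij him y hy) (O i j x hx).1
  · intro i j hij x hx y hy
    exact pj_one_zero hchar hcomm hJordan (hidem i) (D i x hx) (D0 j i hij.symm y hy)
  · intro i j m hij hjm him x hx y hy
    exact pj_one_zero hchar hcomm hJordan (hidem i) (D i x hx) (O0 j m i hjm hij him y hy)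
  · intro i j m l hij him hil hjm hjl hml x hx y hy
    exact pj_one_zero hchar hcomm hJordan (idem2 i j hij) (O1 i j x hx)
      (by rw [mul_add, O0 m l i hml him hil y hy, O0 m l j hml hjm hjl y hy, add_zero])
end

section
/- Let J be a finite-dimensional Jordan algebra over a field k of characteristic ≠ 2, let e ∈ J be an idempotent, let N be a nilpotent ideal of J, and write N_i = N ∩ J_i(e). If dim_k N_{1/2} = 1, then N_i·N_{1/2} = 0 for i ∈ {0, 1}. -/
variable {k : Type*} [Field k] {J : Type*} [NonUnitalNonAssocCommRing J]
  [Module k J] [SMulCommClass k J J] [IsScalarTower k J J]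

/-- The Peirce component `J_c(e) = {x ∈ J : e·x = c·x}`, a `k`-subspace of `J`. -/
def peirceComp (e : J) (c : k) : Submodule k J where
  carrier := {x : J | e * x = c • x}
  add_mem' := by
    intro a b ha hb
    simp only [Set.mem_setOf_eq] at *
    rw [mul_add, ha, hb, smul_add]
  zero_mem' := by simp
  smul_mem' := by
    intro r x hx
    simp only [Set.mem_setOf_eq] at *
    rw [mul_smul_comm, hx, smul_comm]

/-- For subspaces `A, B ⊆ J`, `A·B` is the `k`-subspace spanned by all products `a·b`
with `a ∈ A`, `b ∈ B`. -/
def submoduleMul (A B : Submodule k J) : Submodule k J :=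
  Submodule.span k {z : J | ∃ a ∈ A, ∃ b ∈ B, z = a * b}

/-- The descending series of a subspace `N`: `nseries N 0 = N^⟨1⟩ = N` and
`nseries N m = N^⟨m+1⟩ = N^⟨m⟩·N`. -/
def nseries (N : Submodule k J) : ℕ → Submodule k J
  | 0 => N
  | m + 1 => submoduleMul (nseries N m) N

theorem jordan_lin_aux (hchar : (2 : k) ≠ 0)
    (hJordan : ∀ x y : J, ((x * x) * y) * x = (x * x) * (y * x))
    (e : J) (he : e * e = e) (z y : J) :
    (2 : k) • (((e * z) * y) * e) + (e * y) * z =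
      (2 : k) • ((e * z) * (y * e)) + e * (y * z) := by
  have h1 := hJordan (e + z) y
  have h2 := hJordan (e - z) y
  have h3 := hJordan z y
  have hze : z * e = e * z := mul_comm z e
  simp only [mul_add, add_mul, mul_sub, sub_mul, he, hze] at h1 h2
  have h : (2 : k) • ((2 : k) • (((e * z) * y) * e) + (e * y) * z -
      ((2 : k) • ((e * z) * (y * e)) + e * (y * z))) = 0 := by
    linear_combination (norm := module) h1 - h2 - (2 : k) • h3
  have := (smul_eq_zero.mp h).resolve_left hchar
  exact sub_eq_zero.mp this

theorem nseries_mem_aux (N : Submodule k J) (x y : J) (c : k) (hc : c ≠ 0) (hx : x ∈ N)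
    (hy : y ∈ N) (h : x * y = c • y) (m : ℕ) : y ∈ nseries N m := by
  induction m with
  | zero => exact hy
  | succ m ih =>
    have h1 : y * x ∈ nseries N (m + 1) := Submodule.subset_span ⟨y, ih, x, hx, rfl⟩
    have h2 : y = c⁻¹ • (y * x) := by
      rw [mul_comm, h, smul_smul, inv_mul_cancel₀ hc, one_smul]
    rw [h2]
    exact Submodule.smul_mem _ _ h1

/-- Let `J` be a finite-dimensional Jordan algebra over a field `k` of characteristic ≠ 2,
`e` an idempotent, `N` a nilpotent ideal, `N_i = N ∩ J_i(e)`. If `dim_k N_{1/2} = 1`,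
then `N_i·N_{1/2} = 0` for `i ∈ {0, 1}`. -/
theorem dim_one_half_prod_zero (hchar : (2 : k) ≠ 0)
    [FiniteDimensional k J]
    (hJordan : ∀ x y : J, ((x * x) * y) * x = (x * x) * (y * x))
    (e : J) (he : e * e = e) (hne : e ≠ 0)
    (N : Submodule k J) (hideal : ∀ x ∈ N, ∀ y : J, x * y ∈ N)
    (hnilp : ∃ m, nseries N m = ⊥)
    (hdim : Module.finrank k ↥(N ⊓ peirceComp e (2⁻¹ : k)) = 1) :
    ∀ i : k, i = 0 ∨ i = 1 →
      ∀ x ∈ N ⊓ peirceComp e i, ∀ y ∈ N ⊓ peirceComp e (2⁻¹ : k), x * y = 0 := by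
  intro i hi x hx y hy
  obtain ⟨hxN, hxe⟩ := hx
  have hxe' : e * x = i • x := hxe
  have hye : e * y = (2⁻¹ : k) • y := hy.2
  have hxy : e * (x * y) = (2⁻¹ : k) • (x * y) := by
    have h := jordan_lin_aux hchar hJordan e he x y
    rw [mul_comm y e, mul_comm y x, hxe', hye] at h
    simp only [smul_mul_assoc, mul_smul_comm] at h
    rw [mul_comm (x * y) e, mul_comm y x] at h
    rcases hi with rfl | rfl
    · simp only [zero_smul, smul_zero, zero_add] at h
      exact h.symm
    · simp only [one_smul, smul_smul, mul_inv_cancel₀ hchar] at h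
      have h2 : (2 : k) • (e * (x * y)) = e * (x * y) + e * (x * y) := two_smul _ _
      have h3 : (x * y) = (2⁻¹ : k) • (x * y) + (2⁻¹ : k) • (x * y) := by
        rw [← two_smul k ((2⁻¹ : k) • (x * y)), smul_smul, mul_inv_cancel₀ hchar, one_smul]
      linear_combination (norm := module) h - h2 + h3
  by_contra hne0
  have hy0 : y ≠ 0 := by
    rintro rfl
    exact hne0 (mul_zero x)
  have hmem : x * y ∈ N ⊓ peirceComp e (2⁻¹ : k) := ⟨hideal x hxN y, hxy⟩
  obtain ⟨c, hc⟩ := (finrank_eq_one_iff_of_nonzero' (⟨y, hy⟩ : ↥(N ⊓ peirceComp e (2⁻¹ : k)))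
    (by simpa [Subtype.ext_iff] using hy0)).mp hdim ⟨x * y, hmem⟩
  have hc' : x * y = c • y := (congrArg Subtype.val hc).symm
  have hc0 : c ≠ 0 := by
    rintro rfl
    exact hne0 (by rw [hc', zero_smul])
  obtain ⟨m, hm⟩ := hnilp
  have := nseries_mem_aux N x y c hc0 hxN hy.1 hc' m
  rw [hm] at this
  exact hy0 ((Submodule.mem_bot k).mp this)
end

section
/- Let J be a Jordan algebra over a field k of characteristic ≠ 2, let e ∈ J be an idempotent, let N be a nilpotent ideal of J, and write N_i = N ∩ J_i(e). If for some i ∈ {0, 1} one has N_{1/2}·N_i = N_{1/2} (equality of subspaces), then N_{1/2} = 0; in other words, for N_{1/2} ≠ 0 the inclusion N_{1/2}·N_i ⊆ N_{1/2} is always strict. -/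
variable {k : Type*} [Field k] {J : Type*} [NonUnitalNonAssocCommRing J]
  [Module k J] [SMulCommClass k J J] [IsScalarTower k J J]

/-- Let `J` be a Jordan algebra over a field `k` of characteristic ≠ 2, `e` an idempotent,
`N` a nilpotent ideal, `N_i = N ∩ J_i(e)`. If `N_{1/2}·N_i = N_{1/2}` for some `i ∈ {0, 1}`,
then `N_{1/2} = 0`; i.e. for `N_{1/2} ≠ 0` the inclusion `N_{1/2}·N_i ⊆ N_{1/2}` is strict. -/
theorem half_mul_diag_ne (hchar : (2 : k) ≠ 0)
    (hJordan : ∀ x y : J, ((x * x) * y) * x = (x * x) * (y * x))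
    (e : J) (he : e * e = e) (hne : e ≠ 0)
    (N : Submodule k J) (hideal : ∀ x ∈ N, ∀ y : J, x * y ∈ N)
    (hnilp : ∃ m, nseries N m = ⊥)
    (i : k) (hi : i = 0 ∨ i = 1)
    (h : submoduleMul (N ⊓ peirceComp e (2⁻¹ : k)) (N ⊓ peirceComp e i)
        = N ⊓ peirceComp e (2⁻¹ : k)) :
    N ⊓ peirceComp e (2⁻¹ : k) = ⊥ := by
  obtain ⟨m, hm⟩ := hnilp
  have key : ∀ n, N ⊓ peirceComp e (2⁻¹ : k) ≤ nseries N n := by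
    intro n
    induction n with
    | zero => exact inf_le_left
    | succ n ih =>
      rw [← h]
      refine Submodule.span_mono ?_
      rintro z ⟨a, ha, b, hb, rfl⟩
      exact ⟨a, ih ha, b, hb.1, rfl⟩
  exact le_bot_iff.mp (hm ▸ key m)
end

section
/- Let J be a Jordan algebra over a field k of characteristic ≠ 2, let e ∈ J be an idempotent, and let N be an ideal of J contained in J_{1/2}(e), i.e., e·x = (1/2)x for every x ∈ N. Then N·N = 0. -/
variable {k : Type*} [Field k] {J : Type*} [NonUnitalNonAssocCommRing J]
  [Module k J] [SMulCommClass k J J] [IsScalarTower k J J]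

/-- Let `J` be a Jordan algebra over a field `k` of characteristic ≠ 2, `e` an idempotent,
and `N` an ideal of `J` contained in `J_{1/2}(e)`. Then `N·N = 0`. -/
theorem ideal_in_half_sq_zero (hchar : (2 : k) ≠ 0)
    (hJordan : ∀ x y : J, ((x * x) * y) * x = (x * x) * (y * x))
    (e : J) (he : e * e = e) (hne : e ≠ 0)
    (N : Submodule k J) (hideal : ∀ x ∈ N, ∀ y : J, x * y ∈ N)
    (hsub : N ≤ peirceComp e (2⁻¹ : k)) :
    ∀ x ∈ N, ∀ y ∈ N, x * y = 0 := by
  have hx2 : ∀ x ∈ N, x * x = 0 := by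
    intro x hx
    have h1 : e * x = (2⁻¹ : k) • x := hsub hx
    have h2 : e * (x * x) = (2⁻¹ : k) • (x * x) := hsub (hideal x hx x)
    have h1' : x * e = (2⁻¹ : k) • x := by rw [mul_comm, h1]
    have h2' : (x * x) * e = (2⁻¹ : k) • (x * x) := by rw [mul_comm, h2]
    have h := hJordan (x + e) e
    simp only [add_mul, mul_add, h1, h1', h2', he, smul_add, smul_mul_assoc, mul_smul_comm] at h
    have h4 : (2⁻¹ * 2⁻¹ : k) • (x * x) = 0 := by
      have h22 : (2⁻¹ : k) + 2⁻¹ = 1 := by field_simp; norm_num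
      have h8 : (2⁻¹ : k) • (2⁻¹ : k) • x + (2⁻¹ : k) • (2⁻¹ : k) • x
          = (2⁻¹ : k) • x := by
        rw [← add_smul, h22, one_smul]
      have h9 : (2⁻¹ : k) • (2⁻¹ : k) • (2⁻¹ : k) • x + (2⁻¹ : k) • (2⁻¹ : k) • (2⁻¹ : k) • x
          = (2⁻¹ : k) • (2⁻¹ : k) • x := by
        rw [← add_smul, h22, one_smul]
      have h7 : (2⁻¹ : k) • (2⁻¹ : k) • (x * x) + (2⁻¹ : k) • (2⁻¹ : k) • (x * x)
          = (2⁻¹ : k) • (x * x) := by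
        rw [← add_smul, h22, one_smul]
      rw [mul_smul]
      clear h1 h2 h1' h2' hJordan hideal
      generalize (2⁻¹ : k) • (2⁻¹ : k) • (2⁻¹ : k) • x = x3 at *
      generalize (2⁻¹ : k) • (2⁻¹ : k) • (x * x) = z2 at *
      generalize (2⁻¹ : k) • (2⁻¹ : k) • x = x2 at *
      generalize (2⁻¹ : k) • (x * x * x) = w at *
      rw [← h7, ← h8, ← h9] at h
      rw [← sub_eq_zero] at h
      rw [← neg_eq_zero, ← h]
      abel
    have hi : (2⁻¹ * 2⁻¹ : k) ≠ 0 := by simp [hchar]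
    exact (smul_eq_zero.mp h4).resolve_left hi
  intro x hx y hy
  have h := hx2 (x + y) (N.add_mem hx hy)
  simp only [add_mul, mul_add, hx2 x hx, hx2 y hy, mul_comm y x, zero_add, add_zero] at h
  have h' : (2 : k) • (x * y) = 0 := by rw [two_smul, h]
  exact (smul_eq_zero.mp h').resolve_left hchar
end

section
/- Let J be a finite-dimensional Jordan algebra over a field k of characteristic ≠ 2, let e ∈ J be an idempotent, and let N be a nilpotent ideal of J with N = N_0 ⊕ N_{1/2} ⊕ N_1 where N_i = N ∩ J_i(e) and dim_k N_0 = dim_k N_{1/2} = dim_k N_1 = 1. Then N^⟨3⟩ = (N·N)·N = 0; in particular the nilpotency type of N cannot be (1,1,1). -/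
variable {k : Type*} [Field k] {J : Type*} [NonUnitalNonAssocCommRing J]
  [Module k J] [SMulCommClass k J J] [IsScalarTower k J J]

theorem aux_nil (N : Submodule k J) (hnilp : ∃ m, nseries N m = ⊥) (v w : J) (hv : v ∈ N)
    (hw : w ∈ N) (c : k) (h : v * w = c • v) : v * w = 0 := by
  by_cases hc : c = 0
  · rw [h, hc, zero_smul]
  obtain ⟨m, hm⟩ := hnilp
  have key : ∀ n, v ∈ nseries N n := by
    intro n
    induction n with
    | zero => exact hv
    | succ n ih =>
      have h2 : v * w ∈ nseries N (n + 1) := Submodule.subset_span ⟨v, ih, w, hw, rfl⟩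
      rw [h] at h2
      exact (Submodule.smul_mem_iff _ hc).1 h2
  have h3 := key m
  rw [hm, Submodule.mem_bot] at h3
  rw [h3, zero_mul]

theorem aux_lin (hchar : (2 : k) ≠ 0)
    (hJordan : ∀ x y : J, ((x * x) * y) * x = (x * x) * (y * x)) (x y z : J) :
    ((x * x) * y) * z + (2 : k) • (((x * z) * y) * x)
      = (x * x) * (y * z) + (2 : k) • ((x * z) * (y * x)) := by
  have e1 := hJordan (x + z) y
  have e2 := hJordan (x - z) y
  have e3 := hJordan z y
  have e4 := hJordan x y
  simp only [mul_add, add_mul, mul_sub, sub_mul, mul_comm z x] at e1 e2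
  rw [← sub_eq_zero]
  have inj : ∀ u : J, (2 : k) • u = 0 → u = 0 := fun u hu => (smul_eq_zero.1 hu).resolve_left hchar
  apply inj
  simp only [two_smul]
  have e5 := congrArg₂ (· - ·) (congrArg₂ (· - ·) e1 e2) (congrArg₂ (· + ·) e3 e3)
  rw [← sub_eq_zero] at e5
  rw [← e5]
  abel

/-- Let `J` be a finite-dimensional Jordan algebra over a field `k` of characteristic ≠ 2,
`e` an idempotent, `N` a nilpotent ideal with `N = N_0 ⊕ N_{1/2} ⊕ N_1` where
`N_i = N ∩ J_i(e)` and each `N_i` is one-dimensional. Then `N^⟨3⟩ = (N·N)·N = 0`;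
in particular the nilpotency type of `N` cannot be `(1,1,1)`. -/
theorem no_type_111_with_all_components (hchar : (2 : k) ≠ 0)
    [FiniteDimensional k J]
    (hJordan : ∀ x y : J, ((x * x) * y) * x = (x * x) * (y * x))
    (e : J) (he : e * e = e) (hne : e ≠ 0)
    (N : Submodule k J) (hideal : ∀ x ∈ N, ∀ y : J, x * y ∈ N)
    (hnilp : ∃ m, nseries N m = ⊥)
    (hdecomp : (N ⊓ peirceComp e (0 : k)) ⊔ (N ⊓ peirceComp e (2⁻¹ : k)) ⊔
        (N ⊓ peirceComp e (1 : k)) = N)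
    (h0 : Module.finrank k ↥(N ⊓ peirceComp e (0 : k)) = 1)
    (hhalf : Module.finrank k ↥(N ⊓ peirceComp e (2⁻¹ : k)) = 1)
    (h1 : Module.finrank k ↥(N ⊓ peirceComp e (1 : k)) = 1) :
    submoduleMul (submoduleMul N N) N = ⊥ := by
  have two : ∀ x : J, (2 : k) • x = x + x := fun x => two_smul k x
  have hlin : ∀ y z : J, (e * y) * z + (2 : k) • (((e * z) * y) * e)
      = e * (y * z) + (2 : k) • ((e * z) * (y * e)) := by
    intro y z
    have := aux_lin hchar hJordan e y z
    rwa [he] at this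
  have gen : ∀ c : k, Module.finrank k ↥(N ⊓ peirceComp e c) = 1 →
      ∃ v ∈ N, e * v = c • v ∧ ∀ w ∈ N, e * w = c • w → ∃ r : k, w = r • v := by
    intro c hc
    obtain ⟨v, -, hv⟩ := finrank_eq_one_iff'.1 hc
    refine ⟨v.1, v.2.1, v.2.2, fun w hw hw2 => ?_⟩
    obtain ⟨r, hr⟩ := hv ⟨w, hw, hw2⟩
    exact ⟨r, (congrArg Subtype.val hr).symm⟩
  obtain ⟨a, haN, ea, ga⟩ := gen 0 h0
  obtain ⟨h, hhN, eh, gh⟩ := gen 2⁻¹ hhalf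
  obtain ⟨b, hbN, eb, gb⟩ := gen 1 h1
  rw [zero_smul] at ea
  rw [one_smul] at eb
  have hN : ∀ x ∈ N, ∃ r s t : k, x = r • a + s • h + t • b := by
    intro x hx
    rw [← hdecomp] at hx
    obtain ⟨y, hy, z, hz, rfl⟩ := Submodule.mem_sup.1 hx
    obtain ⟨u, hu, w, hw, rfl⟩ := Submodule.mem_sup.1 hy
    obtain ⟨r, rfl⟩ := ga u hu.1 hu.2
    obtain ⟨s, rfl⟩ := gh w hw.1 hw.2
    obtain ⟨t, rfl⟩ := gb z hz.1 hz.2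
    exact ⟨r, s, t, rfl⟩
  have aa : a * a = 0 := by
    have h1 := hlin a a
    simp only [ea, mul_comm a e, zero_mul, smul_zero, add_zero] at h1
    obtain ⟨r, hr⟩ := ga (a * a) (hideal a haN a) (by rw [← h1, zero_smul])
    exact aux_nil N hnilp a a haN haN r hr
  have bb : b * b = 0 := by
    have h1 := hlin b b
    simp only [mul_comm b e, eb, mul_comm (b * b) e, two] at h1
    obtain ⟨r, hr⟩ := gb (b * b) (hideal b hbN b) (by
      rw [one_smul]
      have h2 : e * (b * b) - b * b = (b * b + (e * (b * b) + e * (b * b)))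
        - (e * (b * b) + (b * b + b * b)) := by abel
      rw [h1, sub_self] at h2
      exact sub_eq_zero.1 h2)
    exact aux_nil N hnilp b b hbN hbN r hr
  have ab : a * b = 0 := by
    have h1 := hlin a b
    have h2 := hlin b a
    simp only [mul_comm b a, mul_comm b e, mul_comm a e, mul_comm (a * b) e, ea, eb, zero_mul,
      mul_zero, smul_zero, add_zero, zero_add, two] at h1 h2
    rw [h2]
    simpa using h1
  have half : ∀ x : J, (2 : k) • ((2⁻¹ : k) • x) = x := fun x => by
    rw [smul_smul, mul_inv_cancel₀ hchar, one_smul]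
  have ha' : h * a = 0 := by
    have h1 := hlin h a
    simp only [mul_comm a e, ea, eh, zero_mul, smul_zero, add_zero, smul_mul_assoc] at h1
    obtain ⟨r, hr⟩ := gh (h * a) (hideal h hhN a) h1.symm
    exact aux_nil N hnilp h a hhN haN r hr
  have hb' : h * b = 0 := by
    have h1 := hlin h b
    simp only [mul_comm b e, mul_comm h e, eb, eh, smul_mul_assoc, mul_smul_comm, half,
      mul_comm b h, mul_comm (h * b) e] at h1
    obtain ⟨r, hr⟩ := gh (h * b) (hideal h hhN b) (by
      have h3 : (h * b) = (2⁻¹ : k) • (h * b) + (2⁻¹ : k) • (h * b) := by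
        rw [← two, half]
      rw [two] at h1
      have h2 : e * (h * b) - (2⁻¹ : k) • (h * b)
        = ((2⁻¹ : k) • (h * b) + (e * (h * b) + e * (h * b)))
        - (e * (h * b) + ((2⁻¹ : k) • (h * b) + (2⁻¹ : k) • (h * b))) := by abel
      rw [← h3, h1, sub_self] at h2
      exact sub_eq_zero.1 h2)
    exact aux_nil N hnilp h b hhN hbN r hr
  have ha'' : a * h = 0 := by rw [mul_comm, ha']
  have hb'' : b * h = 0 := by rw [mul_comm, hb']
  have ba : b * a = 0 := by rw [mul_comm, ab]
  have hhN2 := hideal h hhN h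
  obtain ⟨r, s, t, hh⟩ := hN _ hhN2
  have hha : (h * h) * a = 0 := by
    rw [hh]; simp [add_mul, smul_mul_assoc, aa, ha', ba]
  have hhb : (h * h) * b = 0 := by
    rw [hh]; simp [add_mul, smul_mul_assoc, bb, hb', ab]
  have hhh : (h * h) * h = 0 := by
    refine aux_nil N hnilp (h * h) h hhN2 hhN s ?_
    conv_lhs => rw [hh]
    simp [add_mul, smul_mul_assoc, ha'', hb'']
  have main : ∀ x ∈ N, ∀ y ∈ N, ∀ z ∈ N, (x * y) * z = 0 := by
    intro x hx y hy z hz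
    obtain ⟨x1, x2, x3, rfl⟩ := hN x hx
    obtain ⟨y1, y2, y3, rfl⟩ := hN y hy
    obtain ⟨z1, z2, z3, rfl⟩ := hN z hz
    simp only [add_mul, mul_add, smul_mul_assoc, mul_smul_comm, aa, ab, ba, bb, ha', hb', ha'',
      hb'', hha, hhb, hhh, smul_zero, add_zero, zero_add, zero_mul]
  rw [eq_bot_iff]
  refine Submodule.span_le.2 ?_
  rintro _ ⟨p, hp, z, hz, rfl⟩
  change p * z = 0
  refine Submodule.span_induction (p := fun p _ => p * z = 0) ?_ ?_ ?_ ?_ hp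
  · rintro _ ⟨x, hx, y, hy, rfl⟩
    exact main x hx y hy z hz
  · exact zero_mul z
  · intro x y _ _ hx hy
    rw [add_mul, hx, hy, add_zero]
  · intro c x _ hx
    rw [smul_mul_assoc, hx, smul_zero]
end

section
/- Every finite-dimensional Jordan algebra J over a field k of characteristic ≠ 2 has a unique maximal nilpotent ideal (its radical): there exists a nilpotent ideal N of J that contains every nilpotent ideal of J. -/
variable {k : Type*} [Field k] {J : Type*} [NonUnitalNonAssocCommRing J]
  [Module k J] [SMulCommClass k J J] [IsScalarTower k J J]
theorem half_zero (hchar : (2 : k) ≠ 0) {a : J} (h : a + a = 0) : a = 0 := by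
  have h2 : (2 : k) • a = 0 := by rw [two_smul]; exact h
  exact (smul_eq_zero.mp h2).resolve_left hchar

theorem half_mem (hchar : (2 : k) ≠ 0) (U : Submodule k J) {a : J} (h : a + a ∈ U) : a ∈ U := by
  have h2 : (2 : k) • a ∈ U := by rw [two_smul]; exact h
  exact (U.smul_mem_iff hchar).mp h2

theorem jordan_lin1 (hchar : (2 : k) ≠ 0)
    (hJ : ∀ x y : J, ((x * x) * y) * x = (x * x) * (y * x)) (x y z : J) :
    ((x * z) * y) * x + ((x * z) * y) * x + ((x * x) * y) * z
      = (x * z) * (y * x) + (x * z) * (y * x) + (x * x) * (y * z) := by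
  have h1 := hJ (x + z) y
  have h2 := hJ (x - z) y
  have h3 := hJ z y
  have hc : z * x = x * z := mul_comm z x
  simp only [mul_add, add_mul, hc] at h1
  simp only [mul_sub, sub_mul, hc] at h2
  apply sub_eq_zero.mp
  apply half_zero hchar
  linear_combination (norm := abel) h1 - h2 - h3 - h3

theorem jordan_lin2 (hchar : (2 : k) ≠ 0)
    (hJ : ∀ x y : J, ((x * x) * y) * x = (x * x) * (y * x)) (x y z w : J) :
    ((x * z) * y) * w + ((w * z) * y) * x + ((x * w) * y) * z
      = (x * z) * (y * w) + (w * z) * (y * x) + (x * w) * (y * z) := by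
  have h1 := jordan_lin1 hchar hJ (x + w) y z
  have h2 := jordan_lin1 hchar hJ x y z
  have h3 := jordan_lin1 hchar hJ w y z
  have hc : w * x = x * w := mul_comm w x
  simp only [mul_add, add_mul, hc] at h1
  apply sub_eq_zero.mp
  apply half_zero hchar
  linear_combination (norm := abel) h1 - h2 - h3

/-- Engel-type property. -/
def EngelP (B : Submodule k J) : Prop :=
  ∀ U : Submodule k J, (∀ b ∈ B, ∀ u ∈ U, b * u ∈ U) → U ≠ ⊤ →
    ∃ v, v ∉ U ∧ ∀ b ∈ B, b * v ∈ U

theorem engel_step (hchar : (2 : k) ≠ 0)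
    (hJ : ∀ x y : J, ((x * x) * y) * x = (x * x) * (y * x))
    (B : Submodule k J) (x : J) (hBB : ∀ b ∈ B, ∀ c ∈ B, b * c ∈ B)
    (hxB : ∀ b ∈ B, x * b ∈ B) (hxx : x * x ∈ B) (hP : EngelP B) :
    EngelP (B ⊔ Submodule.span k {x}) := by
  intro U hU hne
  have hUB : ∀ b ∈ B, ∀ u ∈ U, b * u ∈ U := fun b hb => hU b (Submodule.mem_sup_left hb)
  have hUx : ∀ u ∈ U, x * u ∈ U :=
    hU x (Submodule.mem_sup_right (Submodule.mem_span_singleton_self x))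
  have fin : ∀ v, v ∉ U → (∀ b ∈ B, b * v ∈ U) → x * v ∈ U →
      ∃ v, v ∉ U ∧ ∀ b ∈ B ⊔ Submodule.span k {x}, b * v ∈ U := by
    intro v hv hb hx
    refine ⟨v, hv, fun c hc => ?_⟩
    obtain ⟨b, hbB, y, hy, rfl⟩ := Submodule.mem_sup.mp hc
    obtain ⟨t, rfl⟩ := Submodule.mem_span_singleton.mp hy
    rw [add_mul, smul_mul_assoc]
    exact U.add_mem (hb b hbB) (U.smul_mem t hx)
  -- (bc)(xv)
  have hA : ∀ v, (∀ b ∈ B, b * v ∈ U) → ∀ b ∈ B, ∀ c ∈ B, (b * c) * (x * v) ∈ U := by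
    intro v hv b hb c hc
    have e := jordan_lin2 hchar hJ b v c x
    have e' : (b * c) * (x * v) = x * ((b * c) * v) + c * ((x * b) * v) + b * ((x * c) * v)
        - (x * c) * (b * v) - (x * b) * (c * v) := by
      rw [mul_comm b x, mul_comm v x, mul_comm v b, mul_comm v c,
        mul_comm (b * c * v) x, mul_comm (x * c * v) b, mul_comm (x * b * v) c] at e
      linear_combination (norm := abel) -e
    rw [e']
    exact U.sub_mem (U.sub_mem (U.add_mem (U.add_mem (hUx _ (hv _ (hBB b hb c hc)))
      (hUB c hc _ (hv _ (hxB b hb)))) (hUB b hb _ (hv _ (hxB c hc))))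
      (hUB _ (hxB c hc) _ (hv b hb))) (hUB _ (hxB b hb) _ (hv c hc))
  have hB : ∀ v, (∀ b ∈ B, b * v ∈ U) → ∀ b ∈ B, ∀ c ∈ B, b * (c * (x * v)) ∈ U := by
    intro v hv b hb c hc
    have e := jordan_lin2 hchar hJ x c v b
    have e' : b * (c * (x * v)) = (c * b) * (x * v) + (b * v) * (c * x) + (x * b) * (c * v)
        - x * (c * (b * v)) - ((x * b) * c) * v := by
      rw [mul_comm b (c * (x * v)), mul_comm c (x * v), mul_comm x (c * (b * v)),
        mul_comm c (b * v), mul_comm (c * b) (x * v)]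
      linear_combination (norm := abel) e
    rw [e', mul_comm (b * v) (c * x), mul_comm c x]
    have h5 : (x * b) * c ∈ B := hBB _ (hxB b hb) c hc
    exact U.sub_mem (U.sub_mem (U.add_mem (U.add_mem (hA v hv c hc b hb)
      (hUB _ (hxB c hc) _ (hv b hb))) (hUB _ (hxB b hb) _ (hv c hc)))
      (hUx _ (hUB c hc _ (hv b hb)))) (hv _ h5)
  have hC : ∀ v, (∀ b ∈ B, b * v ∈ U) → ∀ b ∈ B, x * (b * (x * v)) ∈ U := by
    intro v hv b hb
    have h1 : (x * b) * (x * v) ∈ U := by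
      apply half_mem hchar
      have e := jordan_lin1 hchar hJ x v b
      have e' : (x * b) * (x * v) + (x * b) * (x * v)
          = x * ((x * b) * v) + x * ((x * b) * v) + b * ((x * x) * v) - (x * x) * (b * v) := by
        rw [mul_comm x v, mul_comm x (_ * v), mul_comm b (_ * v), mul_comm b v]
        linear_combination (norm := abel) -e
      rw [e']
      have h2 := hUx _ (hv _ (hxB b hb))
      exact U.sub_mem (U.add_mem (U.add_mem h2 h2) (hUB b hb _ (hv _ hxx)))
        (hUB _ hxx _ (hv b hb))
    apply half_mem hchar
    have e := jordan_lin1 hchar hJ x b v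
    have e' : x * (b * (x * v)) + x * (b * (x * v))
        = (x * b) * (x * v) + (x * b) * (x * v) + (x * x) * (b * v) - ((x * x) * b) * v := by
      rw [mul_comm b (x * v), mul_comm x (_ * b), mul_comm (x * b) (x * v), mul_comm x b]
      linear_combination (norm := abel) e
    rw [e']
    exact U.sub_mem (U.add_mem (U.add_mem h1 h1) (hUB _ hxx _ (hv b hb)))
      (hv _ (hBB _ hxx b hb))
  have hD : ∀ v, (∀ b ∈ B, b * v ∈ U) → x * (x * (x * v)) ∈ U := by
    intro v hv
    have h1 : (x * x) * (x * v) ∈ U := by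
      have e := hJ x v
      rw [mul_comm x v, ← e, mul_comm]
      exact hUx _ (hv _ hxx)
    apply half_mem hchar
    have e := jordan_lin1 hchar hJ x x v
    have e' : x * (x * (x * v)) + x * (x * (x * v))
        = (x * x) * (x * v) + (x * x) * (x * v) + (x * x) * (x * v) - ((x * x) * x) * v := by
      have c1 : x * (x * (x * v)) = ((x * v) * x) * x := by
        rw [mul_comm (x * v) x, mul_comm x (x * (x * v))]
      have c2 : (x * v) * (x * x) = (x * x) * (x * v) := mul_comm _ _
      rw [c2] at e
      rw [c1]
      linear_combination (norm := abel) e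
    rw [e']
    refine U.sub_mem (U.add_mem (U.add_mem h1 h1) h1) (hv _ ?_)
    rw [mul_comm]
    exact hxB _ hxx
  have key : ∀ v, (∀ b ∈ B, b * v ∈ U) →
      (∃ v, v ∉ U ∧ ∀ b ∈ B ⊔ Submodule.span k {x}, b * v ∈ U) ∨
      (∀ b ∈ B, b * (x * v) ∈ U) := by
    intro v hv
    by_cases h : ∀ b ∈ B, b * (x * v) ∈ U
    · exact Or.inr h
    · push Not at h
      obtain ⟨b, hb, hbv⟩ := h
      exact Or.inl (fin _ hbv (fun c hc => hB v hv c hc b hb) (hC v hv b hb))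
  obtain ⟨v, hvU, hv⟩ := hP U hUB hne
  by_cases h1 : x * v ∈ U
  · exact fin v hvU hv h1
  rcases key v hv with h | hv1
  · exact h
  by_cases h2 : x * (x * v) ∈ U
  · exact fin _ h1 hv1 h2
  rcases key _ hv1 with h | hv2
  · exact h
  exact fin _ h2 hv2 (hD v hv)

theorem engel_ext [FiniteDimensional k J] (hchar : (2 : k) ≠ 0)
    (hJ : ∀ x y : J, ((x * x) * y) * x = (x * x) * (y * x))
    (D E : Submodule k J) (hDE : D ≤ E) (hEE : ∀ a ∈ E, ∀ b ∈ E, a * b ∈ D)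
    (hP : EngelP D) : EngelP E := by
  obtain ⟨B, ⟨hDB, hBE, hPB⟩, hmax⟩ :=
    (wellFounded_gt (α := Submodule k J)).has_min {B | D ≤ B ∧ B ≤ E ∧ EngelP B}
      ⟨D, le_refl _, hDE, hP⟩
  by_cases hEB : E ≤ B
  · rwa [le_antisymm hEB hBE]
  · exfalso
    obtain ⟨x, hxE, hxB⟩ := SetLike.not_le_iff_exists.mp hEB
    refine hmax (B ⊔ Submodule.span k {x}) ⟨hDB.trans le_sup_left, sup_le hBE ?_, ?_⟩ ?_
    · rw [Submodule.span_singleton_le_iff_mem]; exact hxE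
    · exact engel_step hchar hJ B x (fun b hb c hc => hDB (hEE b (hBE hb) c (hBE hc)))
        (fun b hb => hDB (hEE x hxE b (hBE hb))) (hDB (hEE x hxE x hxE)) hPB
    · refine lt_of_le_of_ne le_sup_left fun h => hxB ?_
      rw [h]
      exact Submodule.mem_sup_right (Submodule.mem_span_singleton_self x)

theorem nseries_mono (N : Submodule k J) (hN : ∀ x ∈ N, ∀ y : J, x * y ∈ N) (m : ℕ) :
    nseries N m ≤ N ∧ nseries N (m + 1) ≤ nseries N m := by
  induction m with
  | zero =>
    refine ⟨le_refl _, Submodule.span_le.mpr ?_⟩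
    rintro _ ⟨a, ha, b, hb, rfl⟩
    exact hN a ha b
  | succ m ih =>
    refine ⟨ih.2.trans ih.1, Submodule.span_le.mpr ?_⟩
    rintro _ ⟨a, ha, b, hb, rfl⟩
    exact Submodule.subset_span ⟨a, ih.2 ha, b, hb, rfl⟩

theorem engel_add [FiniteDimensional k J] (hchar : (2 : k) ≠ 0)
    (hJ : ∀ x y : J, ((x * x) * y) * x = (x * x) * (y * x))
    (M N : Submodule k J) (hM : ∀ x ∈ M, ∀ y : J, x * y ∈ M)
    (hN : ∀ x ∈ N, ∀ y : J, x * y ∈ N) (hnil : ∃ m, nseries N m = ⊥) (hP : EngelP M) :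
    EngelP (M ⊔ N) := by
  obtain ⟨m, hm⟩ := hnil
  have : ∀ j, EngelP (M ⊔ nseries N j) → EngelP (M ⊔ N) := by
    intro j
    induction j with
    | zero => exact id
    | succ j ih =>
      intro h
      apply ih
      refine engel_ext hchar hJ _ _ (sup_le_sup_left (nseries_mono N hN j).2 M) ?_ h
      intro a ha b hb
      obtain ⟨a1, ha1, a2, ha2, rfl⟩ := Submodule.mem_sup.mp ha
      obtain ⟨b1, hb1, b2, hb2, rfl⟩ := Submodule.mem_sup.mp hb
      have e : (a1 + a2) * (b1 + b2) = (a1 * (b1 + b2) + b1 * a2) + a2 * b2 := by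
        rw [add_mul, mul_add a2, mul_comm b1 a2, add_assoc]
      rw [e]
      exact Submodule.add_mem_sup (M.add_mem (hM _ ha1 _) (hM _ hb1 _))
        (Submodule.subset_span ⟨a2, ha2, b2, (nseries_mono N hN j).1 hb2, rfl⟩)
  apply this m
  rwa [hm, sup_bot_eq]

/-- Elements multiplied by `N` into `U`. -/
def upTo (N U : Submodule k J) : Submodule k J where
  carrier := {v | ∀ b ∈ N, b * v ∈ U}
  add_mem' := by
    intro a b ha hb c hc
    rw [mul_add]
    exact U.add_mem (ha c hc) (hb c hc)
  zero_mem' := by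
    intro c _
    rw [mul_zero]
    exact U.zero_mem
  smul_mem' := by
    intro t a ha c hc
    rw [mul_smul_comm]
    exact U.smul_mem t (ha c hc)

/-- Ascending series. -/
def ascSeries (N : Submodule k J) : ℕ → Submodule k J
  | 0 => ⊥
  | m + 1 => upTo N (ascSeries N m)

theorem engel_nil [FiniteDimensional k J] (N : Submodule k J) (hP : EngelP N) :
    ∃ m, nseries N m = ⊥ := by
  have hmono : Monotone (ascSeries N) := by
    apply monotone_nat_of_le_succ
    intro n
    induction n with
    | zero => exact bot_le
    | succ n ih => exact fun v hv b hb => ih (hv b hb)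
  obtain ⟨n, hn⟩ := monotone_stabilizes_iff_noetherian.mpr (inferInstance : IsNoetherian k J)
    ⟨ascSeries N, hmono⟩
  have hs : ascSeries N n = upTo N (ascSeries N n) := hn (n + 1) (Nat.le_succ n)
  have htop : ascSeries N n = ⊤ := by
    by_contra hne
    obtain ⟨v, hv, hb⟩ := hP (ascSeries N n)
      (fun b hb u hu => by rw [hs] at hu; exact hu b hb) hne
    apply hv
    rw [hs]
    exact hb
  have : ∀ i j, i + j = n → nseries N j ≤ ascSeries N i := by
    intro i j
    induction j generalizing i with
    | zero =>
      intro h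
      have : i = n := h
      rw [this, htop]
      exact le_top
    | succ j ih =>
      intro h
      refine Submodule.span_le.mpr ?_
      rintro _ ⟨a, ha, b, hb, rfl⟩
      rw [mul_comm]
      exact ih (i + 1) (by omega) ha b hb
  exact ⟨n, le_bot_iff.mp (this 0 n (Nat.zero_add n))⟩

theorem engelP_bot : EngelP (⊥ : Submodule k J) := by
  intro U _ hne
  obtain ⟨v, hv⟩ : ∃ v, v ∉ U := by
    by_contra! h
    exact hne (Submodule.eq_top_iff'.mpr h)
  refine ⟨v, hv, fun b hb => ?_⟩
  rw [(Submodule.mem_bot k).mp hb, zero_mul]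
  exact U.zero_mem

/-- Every finite-dimensional Jordan algebra `J` over a field `k` of characteristic ≠ 2 has
a unique maximal nilpotent ideal (its radical): there is a nilpotent ideal of `J`
containing every nilpotent ideal of `J`. -/
theorem exists_radical (hchar : (2 : k) ≠ 0)
    [FiniteDimensional k J]
    (hJordan : ∀ x y : J, ((x * x) * y) * x = (x * x) * (y * x)) :
    ∃ N : Submodule k J, (∀ x ∈ N, ∀ y : J, x * y ∈ N) ∧ (∃ m, nseries N m = ⊥) ∧
      ∀ M : Submodule k J, (∀ x ∈ M, ∀ y : J, x * y ∈ M) → (∃ m, nseries M m = ⊥) →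
        M ≤ N := by
  have hbot : ∀ x ∈ (⊥ : Submodule k J), ∀ y : J, x * y ∈ (⊥ : Submodule k J) := by
    intro x hx y
    rw [(Submodule.mem_bot k).mp hx, zero_mul]
    exact Submodule.zero_mem _
  obtain ⟨N, ⟨hN, hnil⟩, hmax⟩ :=
    (wellFounded_gt (α := Submodule k J)).has_min
      {N | (∀ x ∈ N, ∀ y : J, x * y ∈ N) ∧ ∃ m, nseries N m = ⊥} ⟨⊥, hbot, 0, rfl⟩
  refine ⟨N, hN, hnil, fun M hM hMnil => ?_⟩
  have hPN : EngelP N := by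
    have := engel_add hchar hJordan ⊥ N hbot hN hnil engelP_bot
    rwa [bot_sup_eq] at this
  have hP := engel_add hchar hJordan N M hN hM hMnil hPN
  by_contra hle
  refine hmax (N ⊔ M) ⟨?_, engel_nil _ hP⟩ (left_lt_sup.mpr hle)
  intro x hx y
  obtain ⟨a, ha, b, hb, rfl⟩ := Submodule.mem_sup.mp hx
  rw [add_mul]
  exact Submodule.add_mem_sup (hN a ha y) (hM b hb y)
end
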